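/- arXiv:1307.0108 — 3 statements merged into one kernel-verified Lean document; each statement's English description precedes it below -/
import Mathlib

section
/- Let C be a category with all finite limits and images in which the image factorisation of every morphism has a regular epimorphism as first factor (for every morphism f, factorThruImage f is a regular epimorphism). Assume that for every object X the poset Subobject X has a least element ⊥, and that least elements are stable under pullback: for every morphism f : X ⟶ Y, (Subobject.pullback f).obj ⊥ = ⊥. Then C has an initial object; indeed, the underlying object of the least subobject ⊥ of the terminal object of C is an initial object of C. -/
/-!
Write `0` for the underlying object of `⊥ : Subobject (⊤_ C)`. If `Z` admits a morphism to `0`,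
then `Z ⟶ ⊤_ C` factors through `⊥`, so the pullback of `⊥` to `Z` is `⊤`; by stability it is also
`⊥`. Hence `⊥ = ⊤` in `Subobject Z`, and every monomorphism into `Z` is invertible. Applied to
equalizers, this shows that parallel morphisms out of `Z` agree. Consequently the projection
`X ⨯ 0 ⟶ 0` is a monomorphism into `0`, thus an isomorphism, and its inverse followed by the other
projection is a morphism `0 ⟶ X`, unique by the case `Z = 0`.
-/

open CategoryTheory Limits

/-- If `Z` maps to the underlying object of `⊥ : Subobject (⊤_ C)`, every monomorphism into `Z` is
invertible, because `⊥ = ⊤` in `Subobject Z`. -/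
lemma isIso_of_mono_of_hom_bot {C : Type*} [Category C] [HasFiniteLimits C]
    [∀ X : C, OrderBot (Subobject X)]
    (hbot : ∀ {X Y : C} (f : X ⟶ Y), (Subobject.pullback f).obj ⊥ = ⊥)
    {Z W : C} (t : Z ⟶ ((⊥ : Subobject (⊤_ C)) : C)) (m : W ⟶ Z) [Mono m] : IsIso m := by
  have htop : (⊥ : Subobject Z) = ⊤ := by
    rw [← hbot (t ≫ (⊥ : Subobject (⊤_ C)).arrow), Subobject.pullback_comp]
    have h := Subobject.pullback_self (⊥ : Subobject (⊤_ C)).arrow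
    rw [Subobject.mk_arrow] at h
    rw [h, Subobject.pullback_top]
  rw [Subobject.isIso_iff_mk_eq_top]
  exact top_le_iff.mp (htop ▸ bot_le)

lemma hom_ext_of_hom_bot {C : Type*} [Category C] [HasFiniteLimits C]
    [∀ X : C, OrderBot (Subobject X)]
    (hbot : ∀ {X Y : C} (f : X ⟶ Y), (Subobject.pullback f).obj ⊥ = ⊥)
    {Z W : C} (t : Z ⟶ ((⊥ : Subobject (⊤_ C)) : C)) (f g : Z ⟶ W) : f = g := by
  have := isIso_of_mono_of_hom_bot hbot t (equalizer.ι f g)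
  exact (cancel_epi (equalizer.ι f g)).mp (equalizer.condition f g)

/-- In a coherent-like category (finite limits, images with regular-epi image
factorisations, bottom subobjects stable under pullback), the underlying object of the
least subobject of the terminal object is initial. -/
theorem bot_subobject_terminal_isInitial {C : Type*} [Category C]
    [HasFiniteLimits C] [HasImages C]
    (hreg : ∀ {X Y : C} (f : X ⟶ Y), RegularEpi (factorThruImage f))
    [∀ X : C, OrderBot (Subobject X)]
    (hbot : ∀ {X Y : C} (f : X ⟶ Y), (Subobject.pullback f).obj ⊥ = ⊥) :
    Nonempty (IsInitial ((⊥ : Subobject (⊤_ C)) : C)) := by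
  have hiso (X : C) :
      IsIso (prod.snd : X ⨯ ((⊥ : Subobject (⊤_ C)) : C) ⟶ ((⊥ : Subobject (⊤_ C)) : C)) := by
    have : Mono (prod.snd : X ⨯ ((⊥ : Subobject (⊤_ C)) : C) ⟶ ((⊥ : Subobject (⊤_ C)) : C)) :=
      ⟨fun u v _ => hom_ext_of_hom_bot hbot (u ≫ prod.snd) u v⟩
    exact isIso_of_mono_of_hom_bot hbot (𝟙 _) _
  exact ⟨IsInitial.ofUniqueHom
    (fun X => inv (prod.snd : X ⨯ ((⊥ : Subobject (⊤_ C)) : C) ⟶ _) ≫ prod.fst)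
    fun X f => hom_ext_of_hom_bot hbot (𝟙 _) _ _⟩
end

section
/- Let C be a category with pullbacks such that for every morphism f : X ⟶ Y the pullback functor Subobject.pullback f : Subobject Y ⥤ Subobject X has a right adjoint (equivalently, the induced monotone map between the subobject posets has an upper Galois adjoint ∀_f). Then for every object A of C and all subobjects A₁, A₂ of A there exists a largest subobject A₃ of A with A₃ ⊓ A₁ ≤ A₂: that is, A₃ ⊓ A₁ ≤ A₂, and every subobject X of A with X ⊓ A₁ ≤ A₂ satisfies X ≤ A₃. (A₃ is the relative pseudo-complement A₁ ⇒ A₂.) -/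
open CategoryTheory Limits

/-- In a category with pullbacks in which every pullback functor on subobjects has a
right adjoint, relative pseudo-complements of subobjects exist: for all subobjects
`A₁, A₂` of `A` there is a largest subobject `A₃` with `A₃ ⊓ A₁ ≤ A₂`. -/
theorem exists_relative_pseudo_complement {C : Type*} [Category C] [HasPullbacks C]
    (hadj : ∀ {X Y : C} (f : X ⟶ Y), (Subobject.pullback f).IsLeftAdjoint)
    (A : C) (A₁ A₂ : Subobject A) :
    ∃ A₃ : Subobject A, A₃ ⊓ A₁ ≤ A₂ ∧ ∀ X : Subobject A, X ⊓ A₁ ≤ A₂ → X ≤ A₃ := by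
  -- `X ⊓ A₁` is `∃_m (m^* X)` for the inclusion `m` of `A₁`, so `∃_m ⊣ m^* ⊣ ∀_m` makes
  -- `A₃ = ∀_m (m^* A₂)` satisfy `X ≤ A₃ ↔ X ⊓ A₁ ≤ A₂`.
  have := hadj A₁.arrow
  have key (X : Subobject A) : X ⊓ A₁ ≤ A₂ ↔
      X ≤ (Subobject.pullback A₁.arrow).rightAdjoint.obj
        ((Subobject.pullback A₁.arrow).obj A₂) := by
    rw [inf_comm, Subobject.inf_eq_map_pullback]
    exact ((Subobject.mapPullbackAdj A₁.arrow).gc _ _).trans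
      ((Adjunction.ofIsLeftAdjoint (Subobject.pullback A₁.arrow)).gc _ _)
  exact ⟨_, (key _).2 le_rfl, fun X => (key X).1⟩
end

section
/- Let C be a category with pullbacks, images, and binary coproducts, having an initial object all of whose outgoing morphisms are monomorphisms, and suppose that for every morphism f : X ⟶ Y the pullback functor Subobject.pullback f : Subobject Y ⥤ Subobject X has a right adjoint. Then for every object A of C the bounded lattice Subobject A is a Heyting algebra: there exists a binary operation ⇨ on Subobject A such that for all x, a, b : Subobject A one has x ≤ a ⇨ b if and only if x ⊓ a ≤ b. -/
open CategoryTheory Limits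

/-- In a Heyting category (in the paper's sense), every subobject lattice is a Heyting
algebra: there is a relative pseudo-complement `⇨` with `x ≤ a ⇨ b ↔ x ⊓ a ≤ b`. -/
theorem subobject_heyting {C : Type*} [Category C]
    [HasPullbacks C] [HasImages C] [HasBinaryCoproducts C]
    [HasInitial C] [InitialMonoClass C]
    (hadj : ∀ {X Y : C} (f : X ⟶ Y), (Subobject.pullback f).IsLeftAdjoint)
    (A : C) :
    ∃ himp : Subobject A → Subobject A → Subobject A,
      ∀ x a b : Subobject A, x ≤ himp a b ↔ x ⊓ a ≤ b := by
  have := fun a : Subobject A => hadj a.arrow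
  -- With `m` the inclusion of `a`, set `a ⇨ b := ∀_m (m^* b)`. Since `a ⊓ x = ∃_m (m^* x)`,
  -- the adjunctions `∃_m ⊣ m^* ⊣ ∀_m` give the universal property.
  refine ⟨fun a b => (Subobject.pullback a.arrow).rightAdjoint.obj
    ((Subobject.pullback a.arrow).obj b), fun x a b => ?_⟩
  rw [inf_comm, Subobject.inf_eq_map_pullback]
  exact ((Adjunction.ofIsLeftAdjoint (Subobject.pullback a.arrow)).gc.le_iff_le).symm.trans
    ((Subobject.mapPullbackAdj a.arrow).gc.le_iff_le).symm
end
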